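/- For all positive modal formulas φ and ψ, the implication φ ⊃ ψ is a theorem of the modal logic GL if and only if the sequent φ ⊢ ψ is provable in the proof system PGL⁺. -/

import Mathlib

/-- Positive modal formulas, built from propositional variables and `⊥`, `⊤`
by `∨`, `∧`, `◇`, `□`. -/
inductive PosForm : Type
  | var : ℕ → PosForm
  | bot : PosForm
  | top : PosForm
  | or : PosForm → PosForm → PosForm
  | and : PosForm → PosForm → PosForm
  | dia : PosForm → PosForm
  | box : PosForm → PosForm

/-- The value of a positive modal formula in a bounded lattice equipped with
operations `box` and `dia`, under a valuation `v` of the variables. -/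
def PosForm.eval {A : Type*} [Lattice A] [BoundedOrder A]
    (box dia : A → A) (v : ℕ → A) : PosForm → A
  | .var p => v p
  | .bot => ⊥
  | .top => ⊤
  | .or φ ψ => PosForm.eval box dia v φ ⊔ PosForm.eval box dia v ψ
  | .and φ ψ => PosForm.eval box dia v φ ⊓ PosForm.eval box dia v ψ
  | .dia φ => dia (PosForm.eval box dia v φ)
  | .box φ => box (PosForm.eval box dia v φ)

/-- A GLD-lattice structure on a bounded distributive lattice `A`, given by the
modal operations `box` and `dia`. -/
structure IsGLDLattice {A : Type*} [DistribLattice A] [BoundedOrder A]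
    (box dia : A → A) : Prop where
  box_top : box ⊤ = ⊤
  dia_bot : dia ⊥ = ⊥
  box_sup_le : ∀ x y : A, box (x ⊔ y) ≤ box x ⊔ dia y
  inf_dia_le : ∀ x y : A, box x ⊓ dia y ≤ dia (x ⊓ y)
  dia_sup : ∀ x y : A, dia (x ⊔ y) = dia x ⊔ dia y
  box_inf : ∀ x y : A, box (x ⊓ y) = box x ⊓ box y
  dia_dia_le : ∀ x : A, dia (dia x) ≤ dia x
  box_le_box_box : ∀ x : A, box x ≤ box (box x)
  isLUB_inf_boxIter : ∀ x : A, IsLUB {y : A | ∃ n : ℕ, y = x ⊓ box^[n] ⊥} x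
  isGLB_sup_diaIter : ∀ x : A, IsGLB {y : A | ∃ n : ℕ, y = x ⊔ dia^[n] ⊤} x

/-- The proof system `PGL⁺` for sequents `φ ⊢ ψ` of positive modal formulas,
including the two `ω`-rules. -/
inductive PGL : PosForm → PosForm → Prop
  | refl (φ : PosForm) : PGL φ φ
  | trans : ∀ {φ ψ χ : PosForm}, PGL φ ψ → PGL ψ χ → PGL φ χ
  | or_inl (φ ψ : PosForm) : PGL φ (.or φ ψ)
  | or_inr (φ ψ : PosForm) : PGL ψ (.or φ ψ)
  | or_elim : ∀ {φ ψ χ : PosForm}, PGL φ χ → PGL ψ χ → PGL (.or φ ψ) χ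
  | and_left (φ ψ : PosForm) : PGL (.and φ ψ) φ
  | and_right (φ ψ : PosForm) : PGL (.and φ ψ) ψ
  | and_intro : ∀ {φ ψ χ : PosForm}, PGL χ φ → PGL χ ψ → PGL χ (.and φ ψ)
  | distrib (φ ψ χ : PosForm) :
      PGL (.and φ (.or ψ χ)) (.or (.and φ ψ) (.and φ χ))
  | dia_mono : ∀ {φ ψ : PosForm}, PGL φ ψ → PGL (.dia φ) (.dia ψ)
  | box_mono : ∀ {φ ψ : PosForm}, PGL φ ψ → PGL (.box φ) (.box ψ)
  | dia_or (φ ψ : PosForm) : PGL (.dia (.or φ ψ)) (.or (.dia φ) (.dia ψ))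
  | box_and (φ ψ : PosForm) : PGL (.and (.box φ) (.box ψ)) (.box (.and φ ψ))
  | dia_box (φ ψ : PosForm) : PGL (.and (.dia φ) (.box ψ)) (.dia (.and φ ψ))
  | box_or (φ ψ : PosForm) : PGL (.box (.or φ ψ)) (.or (.box φ) (.dia ψ))
  | bot_le (φ : PosForm) : PGL .bot φ
  | le_top (φ : PosForm) : PGL φ .top
  | dia_bot : PGL (.dia .bot) .bot
  | box_top : PGL .top (.box .top)
  | dia_dia (φ : PosForm) : PGL (.dia (.dia φ)) (.dia φ)
  | box_box (φ : PosForm) : PGL (.box φ) (.box (.box φ))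
  | gld_box : ∀ {φ ψ : PosForm},
      (∀ n : ℕ, PGL (.and ψ (PosForm.box^[n] .bot)) φ) → PGL ψ φ
  | gld_dia : ∀ {φ ψ : PosForm},
      (∀ n : ℕ, PGL φ (.or ψ (PosForm.dia^[n] .top))) → PGL φ ψ

/-- Modal formulas, built from propositional variables and `⊥`, `⊤` by
`¬`, `∨`, `∧`, `⊃`, `◇`, `□`. -/
inductive Form : Type
  | var : ℕ → Form
  | bot : Form
  | top : Form
  | neg : Form → Form
  | or : Form → Form → Form
  | and : Form → Form → Form
  | imp : Form → Form → Form
  | dia : Form → Form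
  | box : Form → Form

/-- Uniform substitution of formulas for variables. -/
def Form.subst (σ : ℕ → Form) : Form → Form
  | .var n => σ n
  | .bot => .bot
  | .top => .top
  | .neg φ => .neg (φ.subst σ)
  | .or φ ψ => .or (φ.subst σ) (ψ.subst σ)
  | .and φ ψ => .and (φ.subst σ) (ψ.subst σ)
  | .imp φ ψ => .imp (φ.subst σ) (ψ.subst σ)
  | .dia φ => .dia (φ.subst σ)
  | .box φ => .box (φ.subst σ)

/-- A formula is propositional if it contains no modal operators. -/
def Form.IsProp : Form → Prop
  | .var _ => True
  | .bot => True
  | .top => True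
  | .neg φ => φ.IsProp
  | .or φ ψ => φ.IsProp ∧ ψ.IsProp
  | .and φ ψ => φ.IsProp ∧ ψ.IsProp
  | .imp φ ψ => φ.IsProp ∧ ψ.IsProp
  | .dia _ => False
  | .box _ => False

/-- Boolean evaluation of a formula (the value on modal subformulas is
irrelevant and set to `true`); used to express classical tautologies. -/
def Form.evalBool (v : ℕ → Bool) : Form → Bool
  | .var n => v n
  | .bot => false
  | .top => true
  | .neg φ => !(φ.evalBool v)
  | .or φ ψ => φ.evalBool v || ψ.evalBool v
  | .and φ ψ => φ.evalBool v && ψ.evalBool v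
  | .imp φ ψ => !(φ.evalBool v) || ψ.evalBool v
  | .dia _ => true
  | .box _ => true

/-- The provability logic `GLProvable`: the least normal modal logic containing `K`
and the Löb formula, with `◇` defined by `◇p ≡ ¬□¬p`, closed under modus
ponens, uniform substitution and necessitation. -/
inductive GLProvable : Form → Prop
  | taut : ∀ {φ : Form}, φ.IsProp →
      (∀ v : ℕ → Bool, φ.evalBool v = true) → GLProvable φ
  | axK (φ ψ : Form) :
      GLProvable (.imp (.box (.imp φ ψ)) (.imp (.box φ) (.box ψ)))
  | loeb (φ : Form) : GLProvable (.imp (.box (.imp (.box φ) φ)) (.box φ))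
  | diaDef₁ (φ : Form) : GLProvable (.imp (.dia φ) (.neg (.box (.neg φ))))
  | diaDef₂ (φ : Form) : GLProvable (.imp (.neg (.box (.neg φ))) (.dia φ))
  | mp : ∀ {φ ψ : Form}, GLProvable (.imp φ ψ) → GLProvable φ → GLProvable ψ
  | subst : ∀ {φ : Form}, ∀ σ : ℕ → Form, GLProvable φ → GLProvable (φ.subst σ)
  | nec : ∀ {φ : Form}, GLProvable φ → GLProvable (.box φ)

/-- The inclusion of positive modal formulas into modal formulas. -/
def PosForm.toForm : PosForm → Form
  | .var n => .var n
  | .bot => .bot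
  | .top => .top
  | .or φ ψ => .or φ.toForm ψ.toForm
  | .and φ ψ => .and φ.toForm ψ.toForm
  | .dia φ => .dia φ.toForm
  | .box φ => .box φ.toForm

/-!
Both systems are sound and complete for the transitive frames of finite height, and on a frame
`φ ⊃ ψ` is true everywhere exactly when the value of `φ` is contained in that of `ψ`.

For `PGL⁺`, a GLD-lattice embeds into the complex algebra of the frame of its prime filters
containing some `□ⁿ⊥`: by the first `ω`-condition these filters already separate its elements, and
along the canonical relation the least such `n` decreases.

For `GL`, fix the finite set `S` of elements that get boxed in the evaluation of one formula and
let `w` see `v` when every `a ∈ S` with `□a ∈ w` satisfies `a, □a ∈ v`, and `v` contains some `□a`,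
`a ∈ S`, that `w` does not. Paths then have at most `|S|` steps. If `□a ∉ w`, the filter
`{x | □x ∈ w}` together with `□a` avoids `a` by the Löb inequality, so it extends to a successor of
`w` refuting `a`.
-/

open Order

/-! ### Points of a distributive lattice -/

section Points

variable {A W : Type*} [DistribLattice A] [BoundedOrder A]

/-- A point of a bounded distributive lattice, i.e. a prime filter, encoded as a homomorphism to
`Prop`. Points are the worlds of the canonical frames. -/
abbrev Point (A : Type*) [Lattice A] [BoundedOrder A] : Type _ := BoundedLatticeHom A Prop

/-- The point whose false elements form the prime ideal `J`. -/
def pointOfPrimeIdeal (J : Ideal A) [hJ : J.IsPrime] : Point A where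
  toFun a := a ∉ J
  map_sup' a b := by simp [Ideal.sup_mem_iff, imp_iff_not_or]
  map_inf' a b := propext
    ⟨fun h => ⟨fun ha => h (J.lower inf_le_left ha), fun hb => h (J.lower inf_le_right hb)⟩,
      fun h hab => (hJ.mem_or_mem hab).elim h.1 h.2⟩
  map_top' := by simpa using Ideal.isProper_iff_top_notMem.1 hJ.toIsProper
  map_bot' := by simp

theorem exists_point_separating (F : PFilter A) (I : Ideal A) {a b : A}
    (h : ∀ x ∈ F, ∀ y ∈ I, ¬x ⊓ a ≤ y ⊔ b) :
    ∃ w : Point A, (∀ x ∈ F, w x) ∧ (∀ y ∈ I, ¬w y) ∧ w a ∧ ¬w b := by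
  let G : PFilter A := ⟨F.dual ⊔ Ideal.principal (OrderDual.toDual a)⟩
  have mem_G {z : A} : z ∈ G ↔ ∃ x ∈ F, x ⊓ a ≤ z := Lattice.mem_ideal_sup_principal (α := Aᵒᵈ) ..
  have mem_sup {z : A} : z ∈ I ⊔ Ideal.principal b ↔ ∃ y ∈ I, z ≤ y ⊔ b :=
    Lattice.mem_ideal_sup_principal ..
  have disjoint : Disjoint (G : Set A) (I ⊔ Ideal.principal b : Ideal A) := by
    refine Set.disjoint_left.2 fun z hz hz' => ?_
    obtain ⟨x, hx, hxz⟩ := mem_G.1 hz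
    obtain ⟨y, hy, hzy⟩ := mem_sup.1 hz'
    exact h x hx y hy (hxz.trans hzy)
  obtain ⟨J, hJ, hIJ, hGJ⟩ := DistribLattice.prime_ideal_of_disjoint_filter_ideal disjoint
  have notMem_J {z : A} (hz : z ∈ G) : z ∉ J := Set.disjoint_left.1 hGJ hz
  exact ⟨pointOfPrimeIdeal J, fun x hx => notMem_J (mem_G.2 ⟨x, hx, inf_le_left⟩),
    fun y hy => not_not.2 (hIJ (mem_sup.2 ⟨y, hy, le_sup_left⟩)),
    notMem_J (mem_G.2 ⟨⊤, F.top_mem, inf_le_right⟩),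
    not_not.2 (hIJ (mem_sup.2 ⟨⊥, I.bot_mem, le_sup_right⟩))⟩

theorem exists_point_of_not_le {a b : A} (h : ¬a ≤ b) : ∃ w : Point A, w a ∧ ¬w b := by
  obtain ⟨w, -, -, hw⟩ := exists_point_separating (PFilter.principal ⊤) ⊥ (a := a) (b := b)
    (by simpa [← Ideal.principal_bot] using h)
  exact ⟨w, hw⟩

theorem Point.mono (w : Point A) {a b : A} (h : a ≤ b) : w a → w b :=
  OrderHomClass.mono w h

/-- The filter of elements at which a meet-preserving predicate holds. -/
def trueFilter (f : InfTopHom A Prop) : PFilter A :=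
  (IsPFilter.of_def (F := {a | f a}) ⟨⊤, by simp⟩
    (fun a ha b hb => ⟨a ⊓ b, by simpa using ⟨ha, hb⟩, inf_le_left, inf_le_right⟩)
    fun hab => OrderHomClass.mono f hab).toPFilter

/-- The ideal of elements at which a join-preserving predicate fails. -/
def falseIdeal (g : SupBotHom A Prop) : Ideal A :=
  IsIdeal.toIdeal (I := {a | ¬g a})
    ⟨fun _ _ hab hb ha => hb (OrderHomClass.mono g hab ha), ⟨⊥, by simp⟩,
      fun a ha b hb => ⟨a ⊔ b, by simpa using ⟨ha, hb⟩, le_sup_left, le_sup_right⟩⟩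

/-- The set of worlds at which a given element holds, for worlds labelled by points. With all
points as worlds, this is the Stone–Priestley representation of the lattice. -/
def stoneMap (p : W → Point A) : BoundedLatticeHom A (Set W) where
  toFun a := {w | p w a}
  map_sup' a b := by ext; simp
  map_inf' a b := by ext; simp
  map_top' := by ext; simp
  map_bot' := by ext; simp

end Points

/-! ### Magari algebras and finite-height frames -/

/-- An operator `box` making a Boolean algebra a Magari (or diagonalizable) algebra, the algebraic
counterpart of `GL`. -/
structure IsMagariAlgebra {B : Type*} [BooleanAlgebra B] (box : B → B) : Prop where
  box_top : box ⊤ = ⊤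
  box_inf : ∀ x y : B, box (x ⊓ y) = box x ⊓ box y
  loeb : ∀ x : B, box (box x ⇨ x) ≤ box x

namespace IsMagariAlgebra

variable {B : Type*} [BooleanAlgebra B] {box : B → B}

theorem monotone (h : IsMagariAlgebra box) : Monotone box :=
  Monotone.of_map_inf h.box_inf

theorem box_himp_le (h : IsMagariAlgebra box) (x y : B) : box (x ⇨ y) ≤ box x ⇨ box y := by
  rw [le_himp_iff, ← h.box_inf]
  exact h.monotone himp_inf_le

theorem box_le_box_box (h : IsMagariAlgebra box) (x : B) : box x ≤ box (box x) := by
  have loeb_premise : x ≤ box (x ⊓ box x) ⇨ x ⊓ box x :=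
    le_himp_iff.2 (le_inf inf_le_left (inf_le_right.trans (h.monotone inf_le_left)))
  calc
    box x ≤ box (box (x ⊓ box x) ⇨ x ⊓ box x) := h.monotone loeb_premise
    _ ≤ box (x ⊓ box x) := h.loeb _
    _ ≤ box (box x) := h.monotone inf_le_right

end IsMagariAlgebra

/-- The frames characterising both systems: transitive relations in which the lengths of the paths
starting at any given world are bounded, i.e. every world satisfies some `□ⁿ⊥`. -/
structure IsFiniteHeight {W : Type*} (R : SetRel W W) : Prop where
  isTrans : R.IsTrans
  exists_mem_core_iterate : ∀ w, ∃ n, w ∈ R.core^[n] ∅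

section Frames

variable {W : Type*} {R : SetRel W W}

theorem preimage_eq_compl_core_compl (R : SetRel W W) (s : Set W) :
    R.preimage s = (R.core sᶜ)ᶜ := by
  ext w
  simp [and_comm]

theorem preimage_iterate_univ (R : SetRel W W) (n : ℕ) :
    R.preimage^[n] Set.univ = (R.core^[n] ∅)ᶜ := by
  have semiconj : Function.Semiconj compl R.core R.preimage := fun s => by
    rw [preimage_eq_compl_core_compl, compl_compl]
  rw [(semiconj.iterate_right n).eq, Set.compl_empty]

theorem isMagariAlgebra_core [R.IsTrans] (hR : WellFounded fun v w => (w, v) ∈ R) :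
    IsMagariAlgebra R.core where
  box_top := R.core_univ
  box_inf := R.core_inter
  loeb s := by
    intro w hw v
    induction v using hR.induction with
    | h v ih =>
      intro hwv
      have hv : v ∈ R.core s → v ∈ s := by simpa [himp_eq, imp_iff_or_not] using hw hwv
      exact hv fun u hvu => ih u hvu (R.trans hwv hvu)

namespace IsFiniteHeight

theorem of_rank [R.IsTrans] (rank : W → ℕ) (h : ∀ ⦃w v⦄, (w, v) ∈ R → rank v < rank w) :
    IsFiniteHeight R where
  isTrans := inferInstance
  exists_mem_core_iterate w := by
    suffices ∀ n w, rank w < n → w ∈ R.core^[n] ∅ from ⟨_, this _ w (Nat.lt_succ_self _)⟩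
    intro n
    induction n with
    | zero => exact fun w hw => absurd hw (Nat.not_lt_zero _)
    | succ n ih =>
      intro w hw
      rw [Function.iterate_succ_apply']
      exact fun v hwv => ih v (by have := h hwv; omega)

theorem wellFounded (hR : IsFiniteHeight R) : WellFounded fun v w => (w, v) ∈ R := by
  suffices ∀ n, ∀ w ∈ R.core^[n] ∅, Acc (fun v w => (w, v) ∈ R) w from
    ⟨fun w => (hR.exists_mem_core_iterate w).elim fun n hn => this n w hn⟩
  intro n
  induction n with
  | zero => exact fun w hw => hw.elim
  | succ n ih =>
    intro w hw
    rw [Function.iterate_succ_apply'] at hw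
    exact ⟨w, fun v hwv => ih v (hw hwv)⟩

theorem isMagariAlgebra (hR : IsFiniteHeight R) : IsMagariAlgebra R.core :=
  have := hR.isTrans
  isMagariAlgebra_core hR.wellFounded

theorem isGLDLattice (hR : IsFiniteHeight R) : IsGLDLattice R.core R.preimage where
  box_top := R.core_univ
  dia_bot := R.preimage_empty_right
  box_sup_le s t w hw := by
    by_contra! hcon
    simp only [Set.sup_eq_union, Set.mem_union, SetRel.mem_core, SetRel.mem_preimage, not_or,
      not_forall, not_exists, not_and] at hcon
    obtain ⟨⟨v, hwv, hvs⟩, hwt⟩ := hcon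
    exact hwt v ((hw hwv).resolve_left hvs) hwv
  inf_dia_le := by
    rintro s t w ⟨hws, v, hvt, hwv⟩
    exact ⟨v, ⟨hws hwv, hvt⟩, hwv⟩
  dia_sup := R.preimage_union
  box_inf := R.core_inter
  dia_dia_le := by
    rintro s w ⟨v, ⟨u, hus, hvu⟩, hwv⟩
    exact ⟨u, hus, hR.isTrans.trans _ _ _ hwv hvu⟩
  box_le_box_box s w hw v hwv u hvu := hw (hR.isTrans.trans _ _ _ hwv hvu)
  isLUB_inf_boxIter s := by
    refine ⟨by rintro _ ⟨n, rfl⟩; exact inf_le_left, fun t ht w hw => ?_⟩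
    obtain ⟨n, hn⟩ := hR.exists_mem_core_iterate w
    exact ht ⟨n, rfl⟩ ⟨hw, hn⟩
  isGLB_sup_diaIter s := by
    refine ⟨by rintro _ ⟨n, rfl⟩; exact le_sup_left, fun t ht w hw => ?_⟩
    obtain ⟨n, hn⟩ := hR.exists_mem_core_iterate w
    refine (ht ⟨n, rfl⟩ hw).resolve_right fun hdia => ?_
    rw [Set.top_eq_univ, preimage_iterate_univ] at hdia
    exact hdia hn

end IsFiniteHeight

end Frames

/-! ### The canonical frame of a GLD-lattice -/

namespace IsGLDLattice

variable {A : Type*} [DistribLattice A] [BoundedOrder A] {box dia : A → A}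

/-- The canonical relation `□⁻¹w ⊆ v ⊆ ◇⁻¹w` between prime filters. -/
def canonicalRel (box dia : A → A) : SetRel (Point A) (Point A) :=
  {(w, v) | (∀ a, w (box a) → v a) ∧ ∀ a, v a → w (dia a)}

theorem isTrans_canonicalRel (h : IsGLDLattice box dia) : (canonicalRel box dia).IsTrans where
  trans _ _ _ hwv hvu :=
    ⟨fun a ha => hvu.1 a (hwv.1 _ (Point.mono _ (h.box_le_box_box a) ha)),
      fun a ha => Point.mono _ (h.dia_dia_le a) (hwv.2 _ (hvu.2 a ha))⟩

theorem exists_canonicalRel (h : IsGLDLattice box dia) (w : Point A) {a b : A}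
    (hab : ∀ x y, w (box x) → x ⊓ a ≤ y ⊔ b → w (dia y)) :
    ∃ v, (w, v) ∈ canonicalRel box dia ∧ v a ∧ ¬v b := by
  let F := trueFilter (A := A)
    { toFun x := w (box x)
      map_inf' x y := by simp [h.box_inf]
      map_top' := by simp [h.box_top] }
  let I := falseIdeal (A := A)
    { toFun x := w (dia x)
      map_sup' x y := by simp [h.dia_sup]
      map_bot' := by simp [h.dia_bot] }
  obtain ⟨v, hF, hI, hv⟩ := exists_point_separating F I
    fun x hx y hy hxy => hy (hab x y hx hxy)
  exact ⟨v, ⟨hF, fun a ha => not_not.1 fun hda => hI a hda ha⟩, hv⟩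

theorem exists_canonicalRel_of_dia (h : IsGLDLattice box dia) {w : Point A} {a : A}
    (ha : w (dia a)) : ∃ v, (w, v) ∈ canonicalRel box dia ∧ v a := by
  obtain ⟨v, hwv, hva, -⟩ := h.exists_canonicalRel w (a := a) (b := ⊥) fun x y hx hxy => by
    have hdia : w (dia (x ⊓ a)) := w.mono (h.inf_dia_le x a) (by simpa using ⟨hx, ha⟩)
    have dia_mono : Monotone dia := Monotone.of_map_sup h.dia_sup
    exact w.mono (dia_mono (by simpa using hxy)) hdia
  exact ⟨v, hwv, hva⟩

theorem exists_canonicalRel_of_not_box (h : IsGLDLattice box dia) {w : Point A} {b : A}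
    (hb : ¬w (box b)) : ∃ v, (w, v) ∈ canonicalRel box dia ∧ ¬v b := by
  obtain ⟨v, hwv, -, hvb⟩ := h.exists_canonicalRel w (a := ⊤) (b := b) fun x y hx hxy => by
    have box_mono : Monotone box := Monotone.of_map_inf h.box_inf
    have hbox : w (box (b ⊔ y)) := w.mono (box_mono (by simpa [sup_comm] using hxy)) hx
    have hsup : w (box b) ∨ w (dia y) := by simpa using w.mono (h.box_sup_le b y) hbox
    exact hsup.resolve_left hb
  exact ⟨v, hwv, hvb⟩

/-- The points at which some `□ⁿ⊥` holds, which are the worlds of the canonical frame. -/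
abbrev FinitePoint (box : A → A) : Type _ := {w : Point A // ∃ n : ℕ, w (box^[n] ⊥)}

theorem finite_of_canonicalRel {w v : Point A} (hwv : (w, v) ∈ canonicalRel box dia)
    (hw : ∃ n : ℕ, w (box^[n] ⊥)) : ∃ n : ℕ, v (box^[n] ⊥) := by
  obtain ⟨_ | n, hn⟩ := hw
  · simp at hn
  · rw [Function.iterate_succ_apply'] at hn
    exact ⟨n, hwv.1 _ hn⟩

/-- The canonical frame, on the points at which some `□ⁿ⊥` holds. -/
def canonicalFrame (box dia : A → A) : SetRel (FinitePoint box) (FinitePoint box) :=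
  {(w, v) | (w.1, v.1) ∈ canonicalRel box dia}

theorem stoneMap_box (h : IsGLDLattice box dia) (a : A) :
    stoneMap (Subtype.val : FinitePoint box → Point A) (box a) =
      (canonicalFrame box dia).core (stoneMap Subtype.val a) := by
  ext w
  refine ⟨fun ha v hwv => hwv.1 a ha, fun ha => ?_⟩
  by_contra hbox
  obtain ⟨v, hwv, hva⟩ := h.exists_canonicalRel_of_not_box hbox
  exact hva (ha (b := ⟨v, finite_of_canonicalRel hwv w.2⟩) hwv)

theorem stoneMap_dia (h : IsGLDLattice box dia) (a : A) :
    stoneMap (Subtype.val : FinitePoint box → Point A) (dia a) =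
      (canonicalFrame box dia).preimage (stoneMap Subtype.val a) := by
  ext w
  refine ⟨fun ha => ?_, fun ⟨v, hva, hwv⟩ => hwv.2 a hva⟩
  obtain ⟨v, hwv, hva⟩ := h.exists_canonicalRel_of_dia ha
  exact ⟨⟨v, finite_of_canonicalRel hwv w.2⟩, hva, hwv⟩

theorem isFiniteHeight_canonicalFrame (h : IsGLDLattice box dia) :
    IsFiniteHeight (canonicalFrame box dia) where
  isTrans := ⟨fun _ _ _ hwv hvu => h.isTrans_canonicalRel.trans _ _ _ hwv hvu⟩
  exists_mem_core_iterate w := by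
    obtain ⟨n, hn⟩ := w.2
    have iterate : stoneMap Subtype.val (box^[n] ⊥) = (canonicalFrame box dia).core^[n] ∅ := by
      rw [(Function.Semiconj.iterate_right h.stoneMap_box n).eq, map_bot, Set.bot_eq_empty]
    exact ⟨n, iterate ▸ hn⟩

theorem stoneMap_le_stoneMap (h : IsGLDLattice box dia) {a b : A} :
    stoneMap (Subtype.val : FinitePoint box → Point A) a ≤ stoneMap Subtype.val b ↔ a ≤ b := by
  refine ⟨fun hab => ?_, fun hab => OrderHomClass.mono _ hab⟩
  refine (h.isLUB_inf_boxIter a).2 ?_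
  rintro _ ⟨n, rfl⟩
  by_contra hn
  obtain ⟨w, hwa, hwb⟩ := exists_point_of_not_le hn
  rw [map_inf] at hwa
  exact hwb (hab (a := ⟨w, n, hwa.2⟩) hwa.1)

end IsGLDLattice

/-! ### Finite-height frames from a Magari algebra -/

namespace IsMagariAlgebra

variable {B : Type*} [BooleanAlgebra B] {box : B → B} {S : Set B}

theorem exists_point_of_not_box (h : IsMagariAlgebra box) {w : Point B} {a : B}
    (ha : ¬w (box a)) :
    ∃ v : Point B, (∀ b, w (box b) → v b ∧ v (box b)) ∧ v (box a) ∧ ¬v a := by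
  let F := trueFilter (A := B)
    { toFun x := w (box x)
      map_inf' x y := by simp [h.box_inf]
      map_top' := by simp [h.box_top] }
  obtain ⟨v, hF, -, hv⟩ := exists_point_separating F (Ideal.principal ⊥) (a := box a) (b := a)
    fun x hx y hy hxy => by
      have loeb_premise : x ≤ box a ⇨ a := le_himp_iff.2 (by simpa [le_bot_iff.1 hy] using hxy)
      exact ha (w.mono ((h.monotone loeb_premise).trans (h.loeb a)) hx)
  exact ⟨v, fun b hb => ⟨hF b hb, hF (box b) (w.mono (h.box_le_box_box b) hb)⟩, hv⟩

/-- The canonical relation relative to a set `S` of elements whose boxes are to be evaluated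
correctly. The second clause makes the set of `a ∈ S` with `box a` true grow strictly along the
relation, which bounds the lengths of paths when `S` is finite. -/
def canonicalRel (box : B → B) (S : Set B) : SetRel (Point B) (Point B) :=
  {(w, v) | (∀ a ∈ S, w (box a) → v a ∧ v (box a)) ∧ ∃ a ∈ S, ¬w (box a) ∧ v (box a)}

instance isTrans_canonicalRel : (canonicalRel box S).IsTrans where
  trans := by
    rintro w v u ⟨hwv, a, haS, hwa, hva⟩ ⟨hvu, -⟩
    exact ⟨fun b hb hwb => hvu b hb (hwv b hb hwb).2, a, haS, hwa, (hvu a haS hva).2⟩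

theorem isFiniteHeight_canonicalRel (hS : S.Finite) : IsFiniteHeight (canonicalRel box S) := by
  refine .of_rank (fun w => {a ∈ S | ¬w (box a)}.ncard) ?_
  rintro w v ⟨hwv, a, haS, hwa, hva⟩
  have subset : {b ∈ S | ¬v (box b)} ⊆ {b ∈ S | ¬w (box b)} :=
    fun b ⟨hbS, hvb⟩ => ⟨hbS, fun hwb => hvb (hwv b hbS hwb).2⟩
  exact Set.ncard_lt_ncard ⟨subset, fun hsub => (hsub ⟨haS, hwa⟩).2 hva⟩
    (hS.subset (Set.sep_subset ..))

theorem stoneMap_box (h : IsMagariAlgebra box) {a : B} (ha : a ∈ S) :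
    stoneMap id (box a) = (canonicalRel box S).core (stoneMap id a) := by
  ext w
  refine ⟨fun hwa v hwv => (hwv.1 a ha hwa).1, fun hcore => ?_⟩
  by_contra hwa
  obtain ⟨v, hwv, hva, hva'⟩ := h.exists_point_of_not_box hwa
  exact hva' (hcore (b := v) ⟨fun b _ => hwv b, a, ha, hwa, hva⟩)

end IsMagariAlgebra

/-! ### Algebraic semantics -/

section Evaluation

variable {A B C : Type*}

/-- The value of a modal formula in a Boolean algebra with an operator `box`, where `◇` is
interpreted as the dual of `box`. -/
def Form.eval [BooleanAlgebra B] (box : B → B) (v : ℕ → B) : Form → B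
  | .var n => v n
  | .bot => ⊥
  | .top => ⊤
  | .neg φ => (φ.eval box v)ᶜ
  | .or φ ψ => φ.eval box v ⊔ ψ.eval box v
  | .and φ ψ => φ.eval box v ⊓ ψ.eval box v
  | .imp φ ψ => φ.eval box v ⇨ ψ.eval box v
  | .dia φ => (box (φ.eval box v)ᶜ)ᶜ
  | .box φ => box (φ.eval box v)

/-- The elements to which `box` is applied in the evaluation of a modal formula. -/
def Form.boxArgs [BooleanAlgebra B] (box : B → B) (v : ℕ → B) : Form → Set B
  | .var _ | .bot | .top => ∅
  | .neg φ => φ.boxArgs box v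
  | .or φ ψ | .and φ ψ | .imp φ ψ => φ.boxArgs box v ∪ ψ.boxArgs box v
  | .dia φ => insert (φ.eval box v)ᶜ (φ.boxArgs box v)
  | .box φ => insert (φ.eval box v) (φ.boxArgs box v)

theorem Form.finite_boxArgs [BooleanAlgebra B] (box : B → B) (v : ℕ → B) (φ : Form) :
    (φ.boxArgs box v).Finite := by
  induction φ <;> simp_all [Form.boxArgs]

theorem Form.map_eval [BooleanAlgebra B] [BooleanAlgebra C] {box : B → B} {box' : C → C}
    (f : BoundedLatticeHom B C) (v : ℕ → B) (φ : Form)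
    (hbox : ∀ a ∈ φ.boxArgs box v, f (box a) = box' (f a)) :
    f (φ.eval box v) = φ.eval box' (fun n => f (v n)) := by
  induction φ <;> simp_all [Form.eval, Form.boxArgs, himp_eq, or_imp, forall_and]

theorem PosForm.map_eval [Lattice A] [BoundedOrder A] [Lattice C] [BoundedOrder C]
    {box dia : A → A} {box' dia' : C → C} (f : BoundedLatticeHom A C)
    (hbox : ∀ a, f (box a) = box' (f a)) (hdia : ∀ a, f (dia a) = dia' (f a)) (v : ℕ → A)
    (φ : PosForm) : f (φ.eval box dia v) = φ.eval box' dia' (fun n => f (v n)) := by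
  induction φ <;> simp_all [PosForm.eval]

theorem PosForm.eval_toForm [BooleanAlgebra B] (box : B → B) (v : ℕ → B) (φ : PosForm) :
    φ.toForm.eval box v = φ.eval box (fun x => (box xᶜ)ᶜ) v := by
  induction φ <;> simp_all [PosForm.eval, PosForm.toForm, Form.eval]

theorem Form.eval_subst [BooleanAlgebra B] (box : B → B) (v : ℕ → B) (σ : ℕ → Form) (φ : Form) :
    (φ.subst σ).eval box v = φ.eval box fun n => (σ n).eval box v := by
  induction φ <;> simp_all [Form.eval, Form.subst]

open Classical in
theorem Point.eval_iff_evalBool [BooleanAlgebra B] {φ : Form} (hφ : φ.IsProp) (box : B → B)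
    (v : ℕ → B) (w : Point B) :
    w (φ.eval box v) ↔ φ.evalBool (fun n => decide (w (v n))) = true := by
  induction φ <;>
    simp_all [Form.eval, Form.evalBool, Form.IsProp, himp_eq, or_comm]

theorem Form.eval_eq_top_of_taut [BooleanAlgebra B] {φ : Form} (hφ : φ.IsProp)
    (htaut : ∀ v, φ.evalBool v = true) (box : B → B) (v : ℕ → B) : φ.eval box v = ⊤ := by
  refine top_le_iff.1 (of_not_not fun hnot => ?_)
  obtain ⟨w, -, hw⟩ := exists_point_of_not_le hnot
  exact hw ((w.eval_iff_evalBool hφ box v).2 (htaut _))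

theorem GLProvable.eval_eq_top [BooleanAlgebra B] {box : B → B} (h : IsMagariAlgebra box)
    {φ : Form} (hφ : GLProvable φ) (v : ℕ → B) : φ.eval box v = ⊤ := by
  induction hφ generalizing v with
  | taut hprop htaut => exact Form.eval_eq_top_of_taut hprop htaut box v
  | axK φ ψ => exact himp_eq_top_iff.2 (h.box_himp_le _ _)
  | loeb φ => exact himp_eq_top_iff.2 (h.loeb _)
  | diaDef₁ φ => exact himp_self
  | diaDef₂ φ => exact himp_self
  | mp _ _ ihimp ih => exact top_le_iff.1 (ih v ▸ himp_eq_top_iff.1 (ihimp v))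
  | subst σ _ ih => rw [Form.eval_subst, ih]
  | nec _ ih => rw [Form.eval, ih, h.box_top]

theorem PosForm.eval_box_iterate [Lattice A] [BoundedOrder A] (box dia : A → A) (v : ℕ → A)
    (n : ℕ) : (PosForm.box^[n] .bot).eval box dia v = box^[n] ⊥ :=
  Function.Semiconj.iterate_right (f := PosForm.eval box dia v) (fun _ => rfl) n .bot

theorem PosForm.eval_dia_iterate [Lattice A] [BoundedOrder A] (box dia : A → A) (v : ℕ → A)
    (n : ℕ) : (PosForm.dia^[n] .top).eval box dia v = dia^[n] ⊤ :=
  Function.Semiconj.iterate_right (f := PosForm.eval box dia v) (fun _ => rfl) n .top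

theorem PGL.eval_le [DistribLattice A] [BoundedOrder A] {box dia : A → A}
    (h : IsGLDLattice box dia) {φ ψ : PosForm} (hφψ : PGL φ ψ) (v : ℕ → A) :
    φ.eval box dia v ≤ ψ.eval box dia v := by
  induction hφψ with
  | refl φ => exact le_rfl
  | trans _ _ ih₁ ih₂ => exact ih₁.trans ih₂
  | or_inl φ ψ => exact le_sup_left
  | or_inr φ ψ => exact le_sup_right
  | or_elim _ _ ih₁ ih₂ => exact sup_le ih₁ ih₂
  | and_left φ ψ => exact inf_le_left
  | and_right φ ψ => exact inf_le_right
  | and_intro _ _ ih₁ ih₂ => exact le_inf ih₁ ih₂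
  | distrib φ ψ χ => exact (inf_sup_left _ _ _).le
  | dia_mono _ ih => exact Monotone.of_map_sup h.dia_sup ih
  | box_mono _ ih => exact Monotone.of_map_inf h.box_inf ih
  | dia_or φ ψ => exact (h.dia_sup _ _).le
  | box_and φ ψ => exact (h.box_inf _ _).ge
  | dia_box φ ψ =>
    simpa only [PosForm.eval, inf_comm] using
      h.inf_dia_le (ψ.eval box dia v) (φ.eval box dia v)
  | box_or φ ψ => exact h.box_sup_le _ _
  | bot_le φ => exact _root_.bot_le
  | le_top φ => exact _root_.le_top
  | dia_bot => exact h.dia_bot.le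
  | box_top => exact h.box_top.ge
  | dia_dia φ => exact h.dia_dia_le _
  | box_box φ => exact h.box_le_box_box _
  | gld_box _ ih =>
    refine (h.isLUB_inf_boxIter _).2 ?_
    rintro _ ⟨n, rfl⟩
    simpa only [PosForm.eval, PosForm.eval_box_iterate] using ih n
  | gld_dia _ ih =>
    refine (h.isGLB_sup_diaIter _).2 ?_
    rintro _ ⟨n, rfl⟩
    simpa only [PosForm.eval, PosForm.eval_dia_iterate] using ih n

end Evaluation

/-! ### Lindenbaum algebras -/

/-- A preorder that is a bounded distributive lattice up to equivalence, such as formulas ordered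
by provable entailment. -/
class DistribPrelattice (α : Type*) extends Preorder α, BoundedOrder α, Max α, Min α where
  le_sup_left : ∀ a b : α, a ≤ a ⊔ b
  le_sup_right : ∀ a b : α, b ≤ a ⊔ b
  sup_le : ∀ a b c : α, a ≤ c → b ≤ c → a ⊔ b ≤ c
  inf_le_left : ∀ a b : α, a ⊓ b ≤ a
  inf_le_right : ∀ a b : α, a ⊓ b ≤ b
  le_inf : ∀ a b c : α, a ≤ b → a ≤ c → a ≤ b ⊓ c
  inf_sup_le : ∀ a b c : α, a ⊓ (b ⊔ c) ≤ a ⊓ b ⊔ a ⊓ c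

/-- The quotient of a preorder of formulas by interderivability. -/
abbrev LindenbaumAlgebra (α : Type*) [DistribPrelattice α] : Type _ :=
  Antisymmetrization α (· ≤ ·)

namespace LindenbaumAlgebra

variable {α : Type*} [DistribPrelattice α]

/-- The class of a formula in the Lindenbaum algebra. -/
abbrev mk (a : α) : LindenbaumAlgebra α := toAntisymmetrization (· ≤ ·) a

open DistribPrelattice in
instance : Lattice (LindenbaumAlgebra α) where
  __ := instPartialOrderAntisymmetrization
  sup := Quotient.map₂ (· ⊔ ·) fun _ _ hab _ _ hcd =>
    ⟨sup_le _ _ _ (hab.1.trans (le_sup_left _ _)) (hcd.1.trans (le_sup_right _ _)),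
      sup_le _ _ _ (hab.2.trans (le_sup_left _ _)) (hcd.2.trans (le_sup_right _ _))⟩
  inf := Quotient.map₂ (· ⊓ ·) fun _ _ hab _ _ hcd =>
    ⟨le_inf _ _ _ ((inf_le_left _ _).trans hab.1) ((inf_le_right _ _).trans hcd.1),
      le_inf _ _ _ ((inf_le_left _ _).trans hab.2) ((inf_le_right _ _).trans hcd.2)⟩
  le_sup_left := by rintro ⟨a⟩ ⟨b⟩; exact DistribPrelattice.le_sup_left a b
  le_sup_right := by rintro ⟨a⟩ ⟨b⟩; exact DistribPrelattice.le_sup_right a b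
  sup_le := by rintro ⟨a⟩ ⟨b⟩ ⟨c⟩; exact DistribPrelattice.sup_le a b c
  inf_le_left := by rintro ⟨a⟩ ⟨b⟩; exact DistribPrelattice.inf_le_left a b
  inf_le_right := by rintro ⟨a⟩ ⟨b⟩; exact DistribPrelattice.inf_le_right a b
  le_inf := by rintro ⟨a⟩ ⟨b⟩ ⟨c⟩; exact DistribPrelattice.le_inf a b c

instance : DistribLattice (LindenbaumAlgebra α) :=
  .ofInfSupLe <| by rintro ⟨a⟩ ⟨b⟩ ⟨c⟩; exact DistribPrelattice.inf_sup_le a b c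

instance : BoundedOrder (LindenbaumAlgebra α) where
  top := mk ⊤
  bot := mk ⊥
  le_top := by rintro ⟨a⟩; exact le_top (a := a)
  bot_le := by rintro ⟨a⟩; exact bot_le (a := a)

end LindenbaumAlgebra

namespace PosForm

open LindenbaumAlgebra

instance : DistribPrelattice PosForm where
  le := PGL
  le_refl := .refl
  le_trans _ _ _ := .trans
  top := .top
  le_top := .le_top
  bot := .bot
  bot_le := .bot_le
  max := .or
  min := .and
  le_sup_left := .or_inl
  le_sup_right := .or_inr
  sup_le _ _ _ := .or_elim
  inf_le_left := .and_left
  inf_le_right := .and_right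
  le_inf _ _ _ := .and_intro
  inf_sup_le := .distrib

/-- The operator induced by `□` on the Lindenbaum algebra of `PGL⁺`. -/
def boxOp : LindenbaumAlgebra PosForm →o LindenbaumAlgebra PosForm :=
  OrderHom.antisymmetrization ⟨.box, fun _ _ => .box_mono⟩

/-- The operator induced by `◇` on the Lindenbaum algebra of `PGL⁺`. -/
def diaOp : LindenbaumAlgebra PosForm →o LindenbaumAlgebra PosForm :=
  OrderHom.antisymmetrization ⟨.dia, fun _ _ => .dia_mono⟩

theorem boxOp_iterate_bot (n : ℕ) : boxOp^[n] ⊥ = mk (PosForm.box^[n] .bot) :=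
  ((Function.Semiconj.iterate_right (f := mk) (fun _ => rfl) n) PosForm.bot).symm

theorem diaOp_iterate_top (n : ℕ) : diaOp^[n] ⊤ = mk (PosForm.dia^[n] .top) :=
  ((Function.Semiconj.iterate_right (f := mk) (fun _ => rfl) n) PosForm.top).symm

theorem isGLDLattice_lindenbaum : IsGLDLattice boxOp diaOp where
  box_top := top_le_iff.1 PGL.box_top
  dia_bot := le_bot_iff.1 PGL.dia_bot
  box_sup_le := by rintro ⟨φ⟩ ⟨ψ⟩; exact PGL.box_or φ ψ
  inf_dia_le := by
    rintro ⟨φ⟩ ⟨ψ⟩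
    change boxOp (mk φ) ⊓ diaOp (mk ψ) ≤ diaOp (mk φ ⊓ mk ψ)
    rw [inf_comm, inf_comm (mk φ)]
    exact PGL.dia_box ψ φ
  dia_sup := by rintro ⟨φ⟩ ⟨ψ⟩; exact le_antisymm (PGL.dia_or φ ψ) (diaOp.monotone.le_map_sup _ _)
  box_inf := by rintro ⟨φ⟩ ⟨ψ⟩; exact le_antisymm (boxOp.monotone.map_inf_le _ _) (PGL.box_and φ ψ)
  dia_dia_le := by rintro ⟨φ⟩; exact PGL.dia_dia φ
  box_le_box_box := by rintro ⟨φ⟩; exact PGL.box_box φ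
  isLUB_inf_boxIter := by
    rintro ⟨ψ⟩
    refine ⟨by rintro _ ⟨n, rfl⟩; exact inf_le_left, ?_⟩
    rintro ⟨φ⟩ hφ
    exact PGL.gld_box fun n => hφ ⟨n, by rw [boxOp_iterate_bot]⟩
  isGLB_sup_diaIter := by
    rintro ⟨ψ⟩
    refine ⟨by rintro _ ⟨n, rfl⟩; exact le_sup_left, ?_⟩
    rintro ⟨φ⟩ hφ
    exact PGL.gld_dia fun n => hφ ⟨n, by rw [diaOp_iterate_top]⟩

theorem eval_lindenbaum (φ : PosForm) : φ.eval boxOp diaOp (fun n => mk (.var n)) = mk φ := by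
  induction φ <;> simp only [eval, *] <;> rfl

end PosForm

namespace Form

open LindenbaumAlgebra

local infixr:60 " ⇒ " => Form.imp

theorem provable_of_schema (T : Form) (a b c : Form := .bot)
    (hT : T.IsProp := by simp [Form.IsProp])
    (h : ∀ v, T.evalBool v = true := by intro v; grind [Form.evalBool]) :
    GLProvable (T.subst fun | 0 => a | 1 => b | _ => c) :=
  .subst _ (.taut hT h)

local notation "p" => Form.var 0
local notation "q" => Form.var 1
local notation "r" => Form.var 2

instance : DistribPrelattice Form where
  le φ ψ := GLProvable (φ ⇒ ψ)
  le_refl φ := provable_of_schema (p ⇒ p) φ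
  le_trans φ ψ χ hφψ := .mp (.mp (provable_of_schema ((p ⇒ q) ⇒ (q ⇒ r) ⇒ p ⇒ r) φ ψ χ) hφψ)
  top := .top
  le_top φ := provable_of_schema (p ⇒ .top) φ
  bot := .bot
  bot_le φ := provable_of_schema (.bot ⇒ p) φ
  max := .or
  min := .and
  le_sup_left φ ψ := provable_of_schema (p ⇒ .or p q) φ ψ
  le_sup_right φ ψ := provable_of_schema (q ⇒ .or p q) φ ψ
  sup_le φ ψ χ hφ :=
    .mp (.mp (provable_of_schema ((p ⇒ r) ⇒ (q ⇒ r) ⇒ .or p q ⇒ r) φ ψ χ) hφ)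
  inf_le_left φ ψ := provable_of_schema (.and p q ⇒ p) φ ψ
  inf_le_right φ ψ := provable_of_schema (.and p q ⇒ q) φ ψ
  le_inf φ ψ χ hψ :=
    .mp (.mp (provable_of_schema ((p ⇒ q) ⇒ (p ⇒ r) ⇒ p ⇒ .and q r) φ ψ χ) hψ)
  inf_sup_le φ ψ χ :=
    provable_of_schema (.and p (.or q r) ⇒ .or (.and p q) (.and p r)) φ ψ χ

theorem neg_antitone : Antitone Form.neg := fun φ ψ =>
  .mp (provable_of_schema ((p ⇒ q) ⇒ .neg q ⇒ .neg p) φ ψ)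

theorem box_monotone : Monotone Form.box := fun φ ψ hφψ => .mp (.axK φ ψ) (.nec hφψ)

instance : BooleanAlgebra (LindenbaumAlgebra Form) where
  __ : BoundedOrder (LindenbaumAlgebra Form) := inferInstance
  compl := Quotient.map Form.neg fun _ _ h => ⟨neg_antitone h.2, neg_antitone h.1⟩
  inf_compl_le_bot := by rintro ⟨φ⟩; exact provable_of_schema (.and p (.neg p) ⇒ .bot) φ
  top_le_sup_compl := by rintro ⟨φ⟩; exact provable_of_schema (.top ⇒ .or p (.neg p)) φ

theorem mk_eq_top_iff {φ : Form} : mk φ = ⊤ ↔ GLProvable φ :=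
  top_le_iff.symm.trans
    ⟨fun h => .mp h (provable_of_schema .top), .mp (provable_of_schema (p ⇒ .top ⇒ p) φ)⟩

theorem mk_imp (φ ψ : Form) : mk (φ ⇒ ψ) = mk φ ⇨ mk ψ := by
  rw [himp_eq]
  exact le_antisymm (provable_of_schema ((p ⇒ q) ⇒ .or q (.neg p)) φ ψ)
    (provable_of_schema (.or q (.neg p) ⇒ p ⇒ q) φ ψ)

theorem mk_dia (φ : Form) : mk (Form.dia φ) = mk (Form.neg (.box (.neg φ))) :=
  le_antisymm (GLProvable.diaDef₁ φ) (GLProvable.diaDef₂ φ)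

/-- The operator induced by `□` on the Lindenbaum algebra of `GL`. -/
def boxOp : LindenbaumAlgebra Form →o LindenbaumAlgebra Form :=
  OrderHom.antisymmetrization ⟨.box, box_monotone⟩

theorem isMagariAlgebra_lindenbaum : IsMagariAlgebra boxOp where
  box_top := mk_eq_top_iff.2 (.nec (provable_of_schema .top))
  box_inf := by
    rintro ⟨φ⟩ ⟨ψ⟩
    have pairing : Form.box φ ≤ .box (ψ ⇒ .and φ ψ) :=
      box_monotone (provable_of_schema (p ⇒ q ⇒ .and p q) φ ψ)
    have curried : mk (Form.box φ) ≤ mk (Form.box ψ ⇒ .box (.and φ ψ)) :=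
      toAntisymmetrization_mono (pairing.trans (GLProvable.axK ψ _))
    rw [mk_imp] at curried
    exact le_antisymm (boxOp.monotone.map_inf_le _ _) (le_himp_iff.1 curried)
  loeb := by
    rintro ⟨φ⟩
    exact (congrArg boxOp (mk_imp (.box φ) φ)).ge.trans (GLProvable.loeb φ)

theorem eval_lindenbaum (φ : Form) : φ.eval boxOp (fun n => mk (.var n)) = mk φ := by
  induction φ with
  | imp φ ψ ihφ ihψ => rw [eval, ihφ, ihψ, mk_imp]
  | dia φ ih => rw [eval, ih, mk_dia]; rfl
  | _ => simp only [eval, *] <;> rfl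

end Form

/-! ### Kripke completeness -/

theorem pgl_iff_forall_frame {φ ψ : PosForm} :
    PGL φ ψ ↔ ∀ (W : Type) (R : SetRel W W), IsFiniteHeight R → ∀ v : ℕ → Set W,
      φ.eval R.core R.preimage v ≤ ψ.eval R.core R.preimage v := by
  refine ⟨fun h W R hR v => h.eval_le hR.isGLDLattice v, fun h => ?_⟩
  have hA := PosForm.isGLDLattice_lindenbaum
  have hframe := h _ _ hA.isFiniteHeight_canonicalFrame
    fun n => stoneMap Subtype.val (LindenbaumAlgebra.mk (.var n))
  rw [← PosForm.map_eval _ hA.stoneMap_box hA.stoneMap_dia,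
    ← PosForm.map_eval _ hA.stoneMap_box hA.stoneMap_dia, hA.stoneMap_le_stoneMap,
    PosForm.eval_lindenbaum, PosForm.eval_lindenbaum] at hframe
  exact hframe

theorem glProvable_iff_forall_frame {φ : Form} :
    GLProvable φ ↔ ∀ (W : Type) (R : SetRel W W), IsFiniteHeight R → ∀ v : ℕ → Set W,
      φ.eval R.core v = ⊤ := by
  refine ⟨fun h W R hR v => h.eval_eq_top hR.isMagariAlgebra v, fun h => ?_⟩
  have hB := Form.isMagariAlgebra_lindenbaum
  let v (n : ℕ) : LindenbaumAlgebra Form := .mk (.var n)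
  rw [← Form.mk_eq_top_iff, ← Form.eval_lindenbaum, ← top_le_iff]
  by_contra hnot
  obtain ⟨w, -, hw⟩ := exists_point_of_not_le hnot
  have hR : IsFiniteHeight (IsMagariAlgebra.canonicalRel Form.boxOp (φ.boxArgs Form.boxOp v)) :=
    IsMagariAlgebra.isFiniteHeight_canonicalRel (φ.finite_boxArgs _ v)
  have hframe := h _ _ hR fun n => stoneMap id (v n)
  rw [← Form.map_eval (stoneMap id) v φ fun a ha => hB.stoneMap_box ha] at hframe
  exact hw (hframe.ge (Set.mem_univ w))

/-- For positive modal formulas `φ` and `ψ`, the implication `φ ⊃ ψ` is a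
theorem of `GL` iff the sequent `φ ⊢ ψ` is provable in `PGL⁺`. -/
theorem stmt14 (φ ψ : PosForm) :
    GLProvable (Form.imp φ.toForm ψ.toForm) ↔ PGL φ ψ := by
  simp only [glProvable_iff_forall_frame, pgl_iff_forall_frame, Form.eval, himp_eq_top_iff,
    PosForm.eval_toForm, ← preimage_eq_compl_core_compl]
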